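/- Let k be an odd positive integer and n ≥ k(2k+1)+1. Then the minimum cardinality of a subset T of the extended conjugacy class C(B_k) in S_n (permutations that are products of exactly k disjoint transpositions) such that T generates S_n is exactly ⌈(n−1)/k⌉. -/

import Mathlib

open Equiv Equiv.Perm
open scoped Pointwise

/-- The commutator of two involutions whose supports meet in a single point `x` is a product of
two transpositions sharing a point. -/
theorem commutator_eq_swap_mul_swap {α : Type*} [DecidableEq α] {a b : Perm α} {x : α}
    (ha : a * a = 1) (hb : b * b = 1) (hax : a x ≠ x) (hbx : b x ≠ x)
    (h : ∀ w, w ≠ x → a w = w ∨ b w = w) :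
    a * b * a * b = swap (a x) (b x) * swap x (b x) := by
  have haa : ∀ w, a (a w) = w := fun w => by rw [← Perm.mul_apply, ha, Perm.one_apply]
  have hbb : ∀ w, b (b w) = w := fun w => by rw [← Perm.mul_apply, hb, Perm.one_apply]
  have hba : b (a x) = a x := (h _ hax).resolve_left fun e => hax (by grind)
  have hab : a (b x) = b x := (h _ hbx).resolve_right fun e => hbx (by grind)
  ext w
  by_cases hwx : w = x
  · simp [hwx, hab, hbb]
  by_cases hwz : w = b x
  · simp [hwz, hbb, hba, haa, swap_apply_of_ne_of_ne hax.symm hbx.symm]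
  by_cases hwy : w = a x
  · simp only [hwy, Perm.mul_apply, hba, haa, hab]
    rw [swap_apply_of_ne_of_ne hax (hwy ▸ hwz), swap_apply_left]
  have haw : a w ≠ x := fun e => hwy (by rw [← e, haa])
  have hbw : b w ≠ x := fun e => hwz (by rw [← e, hbb])
  rw [Perm.mul_apply (swap _ _), swap_apply_of_ne_of_ne hwx hwz, swap_apply_of_ne_of_ne hwy hwz]
  simp only [Perm.mul_apply]
  rcases h w hwx with e | e
  · rcases h _ hbw with e' | e'
    · rw [e', hbb, e]
    · rw [hbb] at e'
      simp only [← e', e]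
  · rcases h _ haw with e' | e'
    · rw [haa] at e'
      simp only [e, ← e']
    · rw [e, e', haa]

/-- A transitive group generated by a set `T` of permutations which contains two
involutions whose supports meet in a single point `x`, and all of whose generators fix `a x` or
send it to `x`, contains the alternating group. -/
theorem alternatingGroup_le_closure {α : Type*} [Fintype α] [DecidableEq α] {T : Set (Perm α)}
    [MulAction.IsPretransitive (Subgroup.closure T) α] {a b : Perm α} {x : α}
    (haT : a ∈ T) (hbT : b ∈ T) (ha : a * a = 1) (hb : b * b = 1) (hax : a x ≠ x) (hbx : b x ≠ x)
    (h : ∀ w, w ≠ x → a w = w ∨ b w = w) (hT : ∀ g ∈ T, g (a x) = a x ∨ g (a x) = x) :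
    alternatingGroup α ≤ Subgroup.closure T := by
  have haG := Subgroup.subset_closure haT
  have hbG := Subgroup.subset_closure hbT
  have hc := commutator_eq_swap_mul_swap ha hb hax hbx h
  have hcG := mul_mem (mul_mem (mul_mem haG hbG) haG) hbG
  rw [hc] at hcG
  have hxy : a x ≠ b x := by
    intro e
    have haa : a (a x) = x := by rw [← Perm.mul_apply, ha, Perm.one_apply]
    have hbb : b (b x) = x := by rw [← Perm.mul_apply, hb, Perm.one_apply]
    grind
  refine alternatingGroup_le_of_isPreprimitive_of_isThreeCycle_mem ?_
    (g := swap (a x) (b x) * swap x (b x)) ?_ hcG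
  · refine MulAction.IsPreprimitive.of_isTrivialBlock_base (a x) fun {B} hyB hB => ?_
    have key : ∀ g ∈ Subgroup.closure T, ∀ u ∈ B, g u ∈ B → ∀ v ∈ B, g v ∈ B := by
      intro g hg u hu hgu v hv
      have := hB.smul_eq_of_mem (g := ⟨g, hg⟩) hu hgu
      rw [← this]
      exact ⟨v, hv, rfl⟩
    rw [MulAction.IsTrivialBlock, or_iff_not_imp_left, Set.not_subsingleton_iff]
    intro hnt
    obtain ⟨w, hwB, hw⟩ := hnt.exists_ne (a x)
    have cy : (swap (a x) (b x) * swap x (b x)) (a x) = b x := by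
      simp only [Perm.mul_apply, swap_apply_def]; grind
    have cz : (swap (a x) (b x) * swap x (b x)) (b x) = x := by
      simp only [Perm.mul_apply, swap_apply_def]; grind
    have hxB : x ∈ B := by
      by_cases hwx : w = x
      · exact hwx ▸ hwB
      by_cases hwz : w = b x
      · have := key _ hcG _ hyB (by rw [cy, ← hwz]; exact hwB) _ (hwz ▸ hwB)
        rwa [cz] at this
      · have cw : (swap (a x) (b x) * swap x (b x)) w = w := by
          simp only [Perm.mul_apply, swap_apply_def]; grind
        have k := key _ hcG w hwB (by rwa [cw])
        have := k _ (k _ hyB)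
        rwa [cy, cz] at this
    have hstab : Subgroup.closure T ≤ MulAction.stabilizer (Perm α) B := by
      rw [Subgroup.closure_le]
      intro g hg
      have : g (a x) ∈ B := by rcases hT g hg with e | e <;> rw [e] <;> assumption
      exact hB.smul_eq_of_mem (g := ⟨g, Subgroup.subset_closure hg⟩) hyB this
    refine Set.eq_univ_of_forall fun v => ?_
    obtain ⟨g, rfl⟩ := MulAction.exists_smul_eq (Subgroup.closure T) (a x) v
    have := MulAction.mem_stabilizer_iff.1 (hstab g.2)
    rw [← this]
    exact ⟨_, hyB, rfl⟩
  · rw [swap_comm (a x), swap_comm x]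
    exact isThreeCycle_swap_mul_swap_same hxy.symm hbx hax

theorem eq_top_of_alternatingGroup_le {α : Type*} [Fintype α] [DecidableEq α]
    {G : Subgroup (Perm α)} (hG : alternatingGroup α ≤ G) {a : Perm α} (ha : a ∈ G)
    (hs : sign a = -1) : G = ⊤ := by
  refine eq_top_iff.2 fun g _ => ?_
  rcases Int.units_eq_one_or (sign g) with h | h
  · exact hG (mem_alternatingGroup.2 h)
  · have : g * a ∈ G := hG (mem_alternatingGroup.2 (by simp [h, hs]))
    simpa using mul_mem this (inv_mem ha)

theorem mul_self_of_cycleType {α : Type*} [Fintype α] [DecidableEq α] {k : ℕ} {g : Perm α}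
    (hg : g.cycleType = Multiset.replicate k 2) : g * g = 1 := by
  rw [← sq, pow_prime_eq_one_iff, hg]
  exact fun c hc => Multiset.eq_of_mem_replicate hc

/-- A set of products of `k` disjoint transpositions generating the symmetric group yields
enough transpositions to connect all the points. -/
theorem card_le_of_closure_eq_top {α : Type*} [Fintype α] [DecidableEq α] [Nonempty α] {k : ℕ}
    {T : Finset (Perm α)} (hT : ∀ g ∈ T, g.cycleType = Multiset.replicate k 2)
    (hgen : Subgroup.closure (T : Set (Perm α)) = ⊤) : Fintype.card α ≤ k * T.card + 1 := by
  let G : SimpleGraph α := SimpleGraph.fromRel fun x y => ∃ g ∈ T, g x = y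
  have hreach : ∀ g ∈ Subgroup.closure (T : Set (Perm α)), ∀ x, G.Reachable x (g x) := by
    intro g hg
    induction hg using Subgroup.closure_induction with
    | mem g hg =>
      intro x
      by_cases hx : x = g x
      · rw [← hx]
      · exact SimpleGraph.Adj.reachable
          ((SimpleGraph.fromRel_adj _ _ _).2 ⟨hx, Or.inl ⟨g, hg, rfl⟩⟩)
    | one => intro x; rfl
    | mul g h _ _ ihg ihh => exact fun x => (ihh x).trans (ihg (h x))
    | inv g _ ih => intro x; simpa using (ih (g⁻¹ x)).symm
  have hconn : G.Connected := by
    rw [SimpleGraph.connected_iff]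
    refine ⟨fun x y => ?_, inferInstance⟩
    simpa using hreach (swap x y) (hgen ▸ Subgroup.mem_top _) x
  have hsub : G.edgeSet ⊆ T.biUnion fun g => g.support.image fun x => s(x, g x) := by
    intro e
    induction e with | _ x y
    rw [SimpleGraph.mem_edgeSet, SimpleGraph.fromRel_adj]
    simp only [Finset.coe_biUnion, Set.mem_iUnion, Finset.mem_coe, Finset.mem_image, mem_support]
    rintro ⟨hne, ⟨g, hg, rfl⟩ | ⟨g, hg, rfl⟩⟩
    · exact ⟨g, hg, x, hne.symm, rfl⟩
    · exact ⟨g, hg, y, hne, Sym2.eq_swap⟩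
  have hcard : ∀ g ∈ T, (g.support.image fun x => s(x, g x)).card ≤ k := by
    intro g hg
    have hgg : ∀ x, g (g x) = x := fun x => by
      rw [← Perm.mul_apply, mul_self_of_cycleType (hT g hg), Perm.one_apply]
    have h2 : 2 * (g.support.image fun x => s(x, g x)).card ≤ g.support.card := by
      refine Finset.mul_card_image_le_card _ _ fun e he => ?_
      obtain ⟨x, hx, rfl⟩ := Finset.mem_image.1 he
      rw [← Finset.card_pair (mem_support.1 hx).symm]
      refine Finset.card_le_card fun y hy => ?_
      rcases Finset.mem_insert.1 hy with rfl | hy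
      · exact Finset.mem_filter.2 ⟨hx, rfl⟩
      · rw [Finset.mem_singleton.1 hy]
        exact Finset.mem_filter.2 ⟨apply_mem_support.2 hx, by rw [hgg]; exact Sym2.eq_swap⟩
    have h3 := sum_cycleType g
    rw [hT g hg, Multiset.sum_replicate, smul_eq_mul] at h3
    omega
  have h1 := hconn.card_vert_le_card_edgeSet_add_one
  have h2 := Set.ncard_le_ncard hsub
  rw [Set.ncard_coe_finset] at h2
  have h3 := Finset.card_biUnion_le_card_mul T _ k hcard
  rw [Nat.card_eq_fintype_card, Nat.card_coe_set_eq] at h1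
  linarith

/-- The product of the transpositions `(u i, v i)` with `i = j + q * m`, `q < k`. -/
def progressionProd {α : Type*} [DecidableEq α] (u v : ℕ → α) (k m j : ℕ) : Perm α :=
  ((List.range k).map fun q => swap (u (j + q * m)) (v (j + q * m))).prod

section progressionProd

variable {α : Type*} [DecidableEq α] {u v : ℕ → α} {k m j : ℕ}

theorem pairwise_disjoint_swap
    (hd : ∀ q q', q < q' → q' < k → u (j + q * m) ≠ u (j + q' * m) ∧
      u (j + q * m) ≠ v (j + q' * m) ∧ v (j + q * m) ≠ u (j + q' * m) ∧
      v (j + q * m) ≠ v (j + q' * m)) :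
    ((List.range k).map fun q => swap (u (j + q * m)) (v (j + q * m))).Pairwise Disjoint := by
  rw [List.pairwise_map]
  refine List.pairwise_lt_range.imp_of_mem fun {q q'} _ hq' hlt => ?_
  obtain ⟨h1, h2, h3, h4⟩ := hd q q' hlt (List.mem_range.1 hq')
  intro w
  simp only [swap_apply_def]
  grind

theorem cycleType_progressionProd [Fintype α] (huv : ∀ i, u i ≠ v i)
    (hd : ∀ q q', q < q' → q' < k → u (j + q * m) ≠ u (j + q' * m) ∧
      u (j + q * m) ≠ v (j + q' * m) ∧ v (j + q * m) ≠ u (j + q' * m) ∧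
      v (j + q * m) ≠ v (j + q' * m)) :
    (progressionProd u v k m j).cycleType = Multiset.replicate k 2 := by
  rw [progressionProd, cycleType_eq _ rfl _ (pairwise_disjoint_swap hd)]
  · rw [List.map_map, ← Multiset.coe_replicate, Multiset.coe_eq_coe]
    refine List.Perm.of_eq (List.eq_replicate_iff.2 ⟨by simp, fun b hb => ?_⟩)
    obtain ⟨q, -, rfl⟩ := List.mem_map.1 hb
    exact card_support_swap (huv _)
  · intro σ hσ
    obtain ⟨q, -, rfl⟩ := List.mem_map.1 hσ
    exact isCycle_swap (huv _)

theorem progressionProd_apply [Fintype α] (huv : ∀ i, u i ≠ v i)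
    (hd : ∀ q q', q < q' → q' < k → u (j + q * m) ≠ u (j + q' * m) ∧
      u (j + q * m) ≠ v (j + q' * m) ∧ v (j + q * m) ≠ u (j + q' * m) ∧
      v (j + q * m) ≠ v (j + q' * m)) {q : ℕ} (hq : q < k) :
    progressionProd u v k m j (u (j + q * m)) = v (j + q * m) := by
  rw [progressionProd, ← eq_on_support_mem_disjoint
    (List.mem_map_of_mem (List.mem_range.2 hq)) (pairwise_disjoint_swap hd), swap_apply_left]
  rw [mem_support, swap_apply_left]
  exact (huv _).symm

theorem exists_of_progressionProd_apply_ne [Fintype α] {w : α}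
    (hw : progressionProd u v k m j w ≠ w) :
    ∃ q < k, w = u (j + q * m) ∨ w = v (j + q * m) := by
  obtain ⟨f, hf, hwf⟩ := exists_mem_support_of_mem_support_prod (mem_support.2 hw)
  obtain ⟨q, hq, rfl⟩ := List.mem_map.1 hf
  refine ⟨q, List.mem_range.1 hq, ?_⟩
  by_contra! h
  exact mem_support.1 hwf (swap_apply_of_ne_of_ne h.1 h.2)

end progressionProd

theorem isPretransitive_closure_of_exists_lt {n : ℕ} {T : Set (Perm (Fin n))}
    (h : ∀ v : Fin n, v.val ≠ 0 → ∃ g ∈ T, ∃ u < v, g u = v) :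
    MulAction.IsPretransitive (Subgroup.closure T) (Fin n) := by
  rcases Nat.eq_zero_or_pos n with rfl | hn
  · exact ⟨fun x => x.elim0⟩
  rw [MulAction.isPretransitive_iff_base (⟨0, hn⟩ : Fin n)]
  intro v
  induction v using WellFoundedLT.induction with
  | ind v ih =>
    by_cases hv : v.val = 0
    · exact ⟨1, by rw [one_smul]; exact Fin.ext hv.symm⟩
    · obtain ⟨g, hg, u, hu, rfl⟩ := h v hv
      obtain ⟨f, rfl⟩ := ih u hu
      exact ⟨⟨g, Subgroup.subset_closure hg⟩ * f, mul_smul _ _ _⟩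

/-- If `n - 1 ≤ k * m < n - 1 + k` with `m` large, then `m` products of `k` disjoint
transpositions generate the symmetric group. -/
theorem exists_generating_finset {k n m : ℕ} (hk : Odd k) (hm : 2 * k + 1 ≤ m) (hn : 4 ≤ n)
    (h1 : n ≤ k * m + 1) (h2 : k * m + 1 < n + k) :
    ∃ T : Finset (Perm (Fin n)), (∀ g ∈ T, g.cycleType = Multiset.replicate k 2) ∧
      Subgroup.closure (T : Set (Perm (Fin n))) = ⊤ ∧ T.card ≤ m := by
  have hk0 := hk.pos
  -- The path `0 - 1 - ⋯ - (n - 1)` with the edge `2 - 3` replaced by `1 - 3`, followed by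
  -- copies of the edge `1 - 2`.
  have hu : ∀ i, ∃ w : Fin n, w.val = if i + 1 < n then if i = 2 then 1 else i else 1 := by
    intro i
    refine ⟨⟨if i + 1 < n then if i = 2 then 1 else i else 1, ?_⟩, rfl⟩
    split_ifs <;> omega
  have hv : ∀ i, ∃ w : Fin n, w.val = if i + 1 < n then i + 1 else 2 := by
    intro i
    refine ⟨⟨if i + 1 < n then i + 1 else 2, ?_⟩, rfl⟩
    split_ifs <;> omega
  choose u hu using hu
  choose v hv using hv
  have huv : ∀ i, u i ≠ v i := by
    intro i
    rw [Ne, Fin.ext_iff, hu, hv]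
    split_ifs <;> omega
  -- All but the last round of edges lie in the tree,
  -- as do the first `m - k + 1` edges of the last one.
  have htree : ∀ j q, q < k → j + k ≤ m → j + q * m + 1 < n := by
    intro j q hq hj
    have : (q + 1) * m ≤ k * m := Nat.mul_le_mul_right m hq
    rw [add_mul] at this
    omega
  have hd : ∀ j < m, ∀ q q', q < q' → q' < k → u (j + q * m) ≠ u (j + q' * m) ∧
      u (j + q * m) ≠ v (j + q' * m) ∧ v (j + q * m) ≠ u (j + q' * m) ∧
      v (j + q * m) ≠ v (j + q' * m) := by
    intro j hj q q' hqq hq'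
    have e1 : (q + 1) * m ≤ q' * m := Nat.mul_le_mul_right m hqq
    have e2 : (q' + 1) * m ≤ k * m := Nat.mul_le_mul_right m hq'
    rw [add_mul] at e1 e2
    have e3 : j + k ≤ m → j + q' * m + 1 < n := htree j q' hq'
    simp only [Ne, Fin.ext_iff, hu, hv]
    split_ifs <;> omega
  have hct : ∀ j < m, (progressionProd u v k m j).cycleType = Multiset.replicate k 2 :=
    fun j hj => cycleType_progressionProd huv (hd j hj)
  set T : Finset (Perm (Fin n)) := (Finset.range m).image (progressionProd u v k m)
  have hmem : ∀ j < m, progressionProd u v k m j ∈ (T : Set (Perm (Fin n))) := fun j hj =>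
    Finset.mem_coe.2 (Finset.mem_image_of_mem _ (Finset.mem_range.2 hj))
  have hcT : ∀ g ∈ T, g.cycleType = Multiset.replicate k 2 := by
    intro g hg
    obtain ⟨j, hj, rfl⟩ := Finset.mem_image.1 hg
    exact hct j (Finset.mem_range.1 hj)
  refine ⟨T, hcT, ?_, Finset.card_image_le.trans_eq (Finset.card_range m)⟩
  have : MulAction.IsPretransitive (Subgroup.closure (T : Set (Perm (Fin n)))) (Fin n) := by
    refine isPretransitive_closure_of_exists_lt fun w hw => ?_
    have hwn := w.2
    have hmod : (w.val - 1) % m < m := Nat.mod_lt _ (by omega)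
    have hdiv : (w.val - 1) % m + (w.val - 1) / m * m = w.val - 1 := Nat.mod_add_div' _ _
    have hq : (w.val - 1) / m < k := by
      rw [Nat.div_lt_iff_lt_mul (by omega)]
      omega
    refine ⟨_, hmem _ hmod, _, ?_, (progressionProd_apply huv (hd _ hmod) hq).trans ?_⟩
    · rw [hdiv, Fin.lt_def, hu]
      split_ifs <;> omega
    · rw [hdiv, Fin.ext_iff, hv]
      split_ifs <;> omega
  have h0 : progressionProd u v k m 0 (u 0) = v 0 := by
    simpa using progressionProd_apply huv (hd 0 (by omega)) hk0
  have h2' : progressionProd u v k m 2 (u 2) = v 2 := by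
    simpa using progressionProd_apply huv (hd 2 (by omega)) hk0
  have hv0 : v 0 = u 2 := by
    rw [Fin.ext_iff, hu, hv]
    split_ifs <;> omega
  have hinv0 := mul_self_of_cycleType (hct 0 (by omega))
  have hinv2 := mul_self_of_cycleType (hct 2 (by omega))
  have h0' : progressionProd u v k m 0 (v 0) = u 0 := by
    rw [← h0, ← Perm.mul_apply, hinv0, Perm.one_apply]
  refine eq_top_of_alternatingGroup_le (a := progressionProd u v k m 0)
    (alternatingGroup_le_closure (hmem 0 (by omega)) (hmem 2 (by omega)) hinv0 hinv2 (x := v 0)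
      ?_ ?_ ?_ ?_) (Subgroup.subset_closure (hmem 0 (by omega))) ?_
  · rw [h0']
    exact huv 0
  · rw [hv0, h2']
    exact (huv 2).symm
  · intro w hw
    by_contra! h
    obtain ⟨q, hq, e⟩ := exists_of_progressionProd_apply_ne h.1
    obtain ⟨q', hq', e'⟩ := exists_of_progressionProd_apply_ne h.2
    have t1 := htree 0 q hq (by omega)
    have t2 := htree 2 q' hq' (by omega)
    have l1 : q < q' → (q + 1) * m ≤ q' * m := fun h => Nat.mul_le_mul_right m h
    have l2 : q' < q → (q' + 1) * m ≤ q * m := fun h => Nat.mul_le_mul_right m h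
    have l3 : q = q' → q * m = q' * m := fun h => by rw [h]
    have l4 : 0 < q' → m ≤ q' * m := fun h => Nat.le_mul_of_pos_left m h
    have l5 : q = 0 → q * m = 0 := fun h => by rw [h, zero_mul]
    rw [add_mul, one_mul] at l1 l2
    simp only [Fin.ext_iff, hu, hv, Ne] at e e' hw
    rw [if_pos t1, if_pos t1] at e
    rw [if_pos t2, if_pos t2] at e'
    split_ifs at e e' hw <;> omega
  · intro g hg
    obtain ⟨j, hj, rfl⟩ := Finset.mem_image.1 (Finset.mem_coe.1 hg)
    rw [h0']
    by_contra! h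
    obtain ⟨q, hq, e⟩ := exists_of_progressionProd_apply_ne h.1
    have hj0 : j = 0 := by
      have hu0 : (u 0).val = 0 := by rw [hu, if_pos (by omega), if_neg (by omega)]
      rw [Fin.ext_iff, Fin.ext_iff, hu0, hu, hv] at e
      rcases e with e | e <;> split_ifs at e
      omega
    exact h.2 (hj0 ▸ h0)
  · rw [sign_of_cycleType, hct 0 (by omega)]
    simp [pow_add, pow_mul, hk.neg_one_pow]

/-- For odd `k ≥ 1` and `n ≥ k(2k+1)+1`, the minimum cardinality of
a subset of the extended conjugacy class `C(B_k)` in `S_n` (permutations whose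
cycle type consists of exactly `k` transpositions) generating `S_n` is
exactly `⌈(n−1)/k⌉`. -/
theorem stmt_8 (k n : ℕ) (hk : Odd k) (hk1 : 1 ≤ k) (hn : k * (2 * k + 1) + 1 ≤ n) :
    IsLeast {c : ℕ | ∃ T : Finset (Equiv.Perm (Fin n)),
        (∀ g ∈ T, g.cycleType = Multiset.replicate k 2) ∧
        Subgroup.closure (T : Set (Equiv.Perm (Fin n))) = ⊤ ∧
        T.card = c} ((n - 1) ⌈/⌉ k) := by
  have hn0 : Nonempty (Fin n) := ⟨⟨0, by omega⟩⟩
  have hlow : ∀ T : Finset (Perm (Fin n)), (∀ g ∈ T, g.cycleType = Multiset.replicate k 2) →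
      Subgroup.closure (T : Set (Perm (Fin n))) = ⊤ → (n - 1) ⌈/⌉ k ≤ T.card := by
    intro T hT hgen
    have := card_le_of_closure_eq_top hT hgen
    rw [Fintype.card_fin] at this
    rw [ceilDiv_le_iff_le_mul hk1]
    omega
  constructor
  · have h1 : n - 1 ≤ k * ((n - 1) ⌈/⌉ k) :=
      (ceilDiv_le_iff_le_mul hk1).1 le_rfl
    have h2 : k * ((n - 1) ⌈/⌉ k) ≤ n - 1 + k - 1 := Nat.mul_div_le _ _
    have hm : 2 * k + 1 ≤ (n - 1) ⌈/⌉ k :=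
      Nat.le_of_mul_le_mul_left ((Nat.le_sub_one_of_lt hn).trans h1) hk1
    have hn4 : 4 ≤ n := by nlinarith
    obtain ⟨T, hT, hgen, hcard⟩ :=
      exists_generating_finset hk hm hn4 (by omega) (by omega)
    exact ⟨T, hT, hgen, hcard.antisymm (hlow T hT hgen)⟩
  · rintro c ⟨T, hT, hgen, rfl⟩
    exact hlow T hT hgen
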